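/- Let M and N be maximum matchings in G. Then Δ(N,M) ≤ Σ_ρ wt_M(ρ), where the sum ranges over the connected components ρ (alternating paths and alternating cycles with respect to M) of the symmetric difference M ⊕ N. -/

import Mathlib

open Classical

noncomputable section

namespace PopMax

/-- A bipartite preference instance `G = (A ∪ B, E)`:
`E a b` says there is an edge between `a ∈ A` and `b ∈ B`;
`prefA a b b'` says `a` strictly prefers `b` to `b'`;
`prefB b a a'` says `b` strictly prefers `a` to `a'`. -/
structure PrefSys (A : Type*) (B : Type*) where
  E : A → B → Prop
  prefA : A → B → B → Prop
  prefB : B → A → A → Prop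

/-- Every node has a strict (linear) preference order over its neighbors. -/
def PrefSys.IsValid {A B : Type*} (I : PrefSys A B) : Prop :=
  (∀ a b, ¬ I.prefA a b b) ∧
  (∀ a b₁ b₂ b₃, I.prefA a b₁ b₂ → I.prefA a b₂ b₃ → I.prefA a b₁ b₃) ∧
  (∀ a b₁ b₂, I.E a b₁ → I.E a b₂ → b₁ ≠ b₂ → I.prefA a b₁ b₂ ∨ I.prefA a b₂ b₁) ∧
  (∀ b a, ¬ I.prefB b a a) ∧
  (∀ b a₁ a₂ a₃, I.prefB b a₁ a₂ → I.prefB b a₂ a₃ → I.prefB b a₁ a₃) ∧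
  (∀ b a₁ a₂, I.E a₁ b → I.E a₂ b → a₁ ≠ a₂ → I.prefB b a₁ a₂ ∨ I.prefB b a₂ a₁)

variable {A B : Type*}

/-- A matching: a set of pairwise disjoint edges. -/
def IsMatching (I : PrefSys A B) (M : Finset (A × B)) : Prop :=
  (∀ p ∈ M, I.E p.1 p.2) ∧
  (∀ p ∈ M, ∀ q ∈ M, p.1 = q.1 → p = q) ∧
  (∀ p ∈ M, ∀ q ∈ M, p.2 = q.2 → p = q)

def matchedA (M : Finset (A × B)) (a : A) : Prop := ∃ b, (a, b) ∈ M
def matchedB (M : Finset (A × B)) (b : B) : Prop := ∃ a, (a, b) ∈ M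

/-- A maximum matching: a matching of maximum cardinality. -/
def IsMaximumMatching (I : PrefSys A B) (M : Finset (A × B)) : Prop :=
  IsMatching I M ∧ ∀ N : Finset (A × B), IsMatching I N → N.card ≤ M.card

/-- A perfect matching matches all nodes. -/
def IsPerfectMatching (I : PrefSys A B) (M : Finset (A × B)) : Prop :=
  IsMatching I M ∧ (∀ a, matchedA M a) ∧ (∀ b, matchedB M b)

/-- `a ∈ A` prefers matching `M` to matching `N`. -/
def prefersA (I : PrefSys A B) (a : A) (M N : Finset (A × B)) : Prop :=
  ∃ b, (a, b) ∈ M ∧ (¬ matchedA N a ∨ ∃ b', (a, b') ∈ N ∧ I.prefA a b b')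

/-- `b ∈ B` prefers matching `M` to matching `N`. -/
def prefersB (I : PrefSys A B) (b : B) (M N : Finset (A × B)) : Prop :=
  ∃ a, (a, b) ∈ M ∧ (¬ matchedB N b ∨ ∃ a', (a', b) ∈ N ∧ I.prefB b a a')

/-- A node `u ∈ A ∪ B` prefers matching `M` to matching `N`. -/
def prefers (I : PrefSys A B) (u : A ⊕ B) (M N : Finset (A × B)) : Prop :=
  match u with
  | Sum.inl a => prefersA I a M N
  | Sum.inr b => prefersB I b M N

/-- `φ(M,N)`: the number of nodes preferring `M` to `N`. -/
def phi [Fintype A] [Fintype B] (I : PrefSys A B) (M N : Finset (A × B)) : ℕ :=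
  (Finset.univ.filter (fun u : A ⊕ B => prefers I u M N)).card

/-- `Δ(M,N) = φ(M,N) − φ(N,M)`. -/
def Delta [Fintype A] [Fintype B] (I : PrefSys A B) (M N : Finset (A × B)) : ℤ :=
  (phi I M N : ℤ) - (phi I N M : ℤ)

/-- A popular max-matching: a maximum matching `M` with `Δ(M,N) ≥ 0`
for every maximum matching `N`. -/
def IsPopularMaxMatching [Fintype A] [Fintype B] (I : PrefSys A B)
    (M : Finset (A × B)) : Prop :=
  IsMaximumMatching I M ∧
    ∀ N : Finset (A × B), IsMaximumMatching I N → 0 ≤ Delta I M N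

/-- The edge `(a,b) ∉ M` blocks `M`. -/
def Blocks (I : PrefSys A B) (M : Finset (A × B)) (a : A) (b : B) : Prop :=
  I.E a b ∧ (a, b) ∉ M ∧
  (¬ matchedA M a ∨ ∃ b', (a, b') ∈ M ∧ I.prefA a b b') ∧
  (¬ matchedB M b ∨ ∃ a', (a', b) ∈ M ∧ I.prefB b a a')

/-- A stable matching: a matching with no blocking edge. -/
def IsStable (I : PrefSys A B) (S : Finset (A × B)) : Prop :=
  IsMatching I S ∧ ∀ a b, ¬ Blocks I S a b

/-- The edge weight `wt_M(a,b) ∈ {0, ±2}`. -/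
def wt (I : PrefSys A B) (M : Finset (A × B)) (a : A) (b : B) : ℤ :=
  if Blocks I M a b then 2
  else if (∃ b', (a, b') ∈ M ∧ I.prefA a b' b) ∧ (∃ a', (a', b) ∈ M ∧ I.prefB b a' a) then -2
  else 0

/-- The underlying simple graph on the node set `A ⊕ B`. -/
def graphOf (I : PrefSys A B) : SimpleGraph (A ⊕ B) :=
  SimpleGraph.fromRel (fun u w =>
    match u, w with
    | Sum.inl a, Sum.inr b => I.E a b
    | _, _ => False)

/-- The (undirected) edge `e` is an edge of the matching `M`. -/
def edgeInM (M : Finset (A × B)) (e : Sym2 (A ⊕ B)) : Prop :=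
  ∃ a b, (a, b) ∈ M ∧ e = s(Sum.inl a, Sum.inr b)

/-- Consecutive edges alternate between `M` and `E ∖ M`. -/
def altRel (M : Finset (A × B)) (e f : Sym2 (A ⊕ B)) : Prop :=
  edgeInM M e ↔ ¬ edgeInM M f

/-- An alternating path with respect to `M`. -/
def IsAltPath (I : PrefSys A B) (M : Finset (A × B)) {u w : A ⊕ B}
    (p : (graphOf I).Walk u w) : Prop :=
  p.IsPath ∧ List.Chain' (altRel M) p.edges

/-- An alternating cycle with respect to `M` (alternation also across the wrap-around). -/
def IsAltCycle (I : PrefSys A B) (M : Finset (A × B)) {w : A ⊕ B}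
    (c : (graphOf I).Walk w w) : Prop :=
  c.IsCycle ∧ List.Chain' (altRel M) (c.edges ++ c.edges.take 1)

/-- `wt_M` as a function on undirected edges. -/
def wtSym (I : PrefSys A B) (M : Finset (A × B)) : Sym2 (A ⊕ B) → ℤ :=
  Sym2.lift ⟨fun u w =>
      match u, w with
      | Sum.inl a, Sum.inr b => wt I M a b
      | Sum.inr b, Sum.inl a => wt I M a b
      | _, _ => 0,
    by rintro (a | b) (a' | b') <;> rfl⟩

/-- `wt_M(ρ) = Σ_{e ∈ ρ} wt_M(e)` for a walk `ρ`. -/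
def wtWalk (I : PrefSys A B) (M : Finset (A × B)) {u w : A ⊕ B}
    (p : (graphOf I).Walk u w) : ℤ :=
  (p.edges.map (wtSym I M)).sum

/-- The node `u ∈ A ∪ B` is unmatched in `M`. -/
def unmatchedNode (M : Finset (A × B)) : A ⊕ B → Prop
  | Sum.inl a => ¬ matchedA M a
  | Sum.inr b => ¬ matchedB M b

/-- The set of edges `(a,b) ∈ A × B` used by the walk `p`. -/
def pairsOf [Fintype A] [Fintype B] (I : PrefSys A B) {u w : A ⊕ B}
    (p : (graphOf I).Walk u w) : Finset (A × B) :=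
  Finset.univ.filter (fun ab : A × B => s(Sum.inl ab.1, Sum.inr ab.2) ∈ p.edges)

/-- `M` is Pareto-optimal: no matching `N` has `φ(N,M) > 0` and `φ(M,N) = 0`. -/
def IsParetoOptimal [Fintype A] [Fintype B] (I : PrefSys A B) (M : Finset (A × B)) : Prop :=
  ¬ ∃ N : Finset (A × B), IsMatching I N ∧ 0 < phi I N M ∧ phi I M N = 0

/-! ### The auxiliary instance `G*` -/

/-- `A* = {a_0, …, a_{n0−1} : a ∈ A}` where `n0 = |A|`. -/
abbrev AStar (A : Type*) [Fintype A] : Type _ := A × Fin (Fintype.card A)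

/-- `B* = B̃ ∪ {d_1(a), …, d_{n0−1}(a) : a ∈ A}`; the dummy node `(a, j)`
(with `j : Fin (n0 − 1)`) stands for `d_{j+1}(a)`. -/
abbrev BStar (A : Type*) (B : Type*) [Fintype A] : Type _ :=
  B ⊕ (A × Fin (Fintype.card A - 1))

/-- The auxiliary instance `G*` with its edges and preferences. -/
def starSys [Fintype A] (I : PrefSys A B) : PrefSys (AStar A) (BStar A B) where
  E := fun ai w =>
    match ai, w with
    | (a, _i), Sum.inl b => I.E a b
    | (a, i), Sum.inr (a', j) => a = a' ∧ ((i : ℕ) = (j : ℕ) ∨ (i : ℕ) = (j : ℕ) + 1)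
  prefA := fun ai u v =>
    match ai, u, v with
    | (a, _i), Sum.inl b, Sum.inl b' => I.prefA a b b'
    | (a, i), Sum.inl _b, Sum.inr (a', j) => a = a' ∧ (j : ℕ) = (i : ℕ)
    | (a, i), Sum.inr (a', j), Sum.inl _b => a = a' ∧ (j : ℕ) + 1 = (i : ℕ)
    | (a, i), Sum.inr (a', j), Sum.inr (a'', j') =>
        a = a' ∧ a = a'' ∧ (j : ℕ) + 1 = (i : ℕ) ∧ (j' : ℕ) = (i : ℕ)
  prefB := fun w x y =>
    match w, x, y with
    | Sum.inl b, (a, i), (a', i') =>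
        (i' : ℕ) < (i : ℕ) ∨ ((i : ℕ) = (i' : ℕ) ∧ I.prefB b a a')
    | Sum.inr (a, j), (a', i), (a'', i') =>
        a' = a ∧ a'' = a ∧ (i : ℕ) = (j : ℕ) ∧ (i' : ℕ) = (j : ℕ) + 1

/-- The projection `S ↦ S'`: delete edges incident to dummy nodes and replace
`(a_i, b̃)` by `(a, b)`. -/
def proj [Fintype A] [Fintype B] (S : Finset (AStar A × BStar A B)) : Finset (A × B) :=
  Finset.univ.filter (fun ab : A × B =>
    ∃ i : Fin (Fintype.card A), ((ab.1, i), (Sum.inl ab.2 : BStar A B)) ∈ S)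

/-- `a ∈ A_i` for the level partition of `A` induced by a (stable) matching `S` in `G*`:
for `i ≤ n0 − 2`, `a ∈ A_i` iff `(a_i, b̃) ∈ S` for some `b̃ ∈ B̃`;
`A_{n0−1}` consists of all remaining nodes of `A`. -/
def AtLevelA [Fintype A] (S : Finset (AStar A × BStar A B)) (a : A) (i : ℕ) : Prop :=
  (i + 1 < Fintype.card A ∧
     ∃ j : Fin (Fintype.card A), (j : ℕ) = i ∧
       ∃ b : B, ((a, j), (Sum.inl b : BStar A B)) ∈ S) ∨
  (i + 1 = Fintype.card A ∧
     ∀ j : Fin (Fintype.card A), (j : ℕ) + 1 < Fintype.card A →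
       ∀ b : B, ((a, j), (Sum.inl b : BStar A B)) ∉ S)

/-- `b ∈ B_i` for the level partition of `B` induced by a (stable) matching `S` in `G*`:
for `1 ≤ i ≤ n0 − 1`, `b ∈ B_i` iff `(a_i, b̃) ∈ S` for some `a ∈ A_i`;
`B_0` consists of all remaining nodes of `B`. -/
def AtLevelB [Fintype A] (S : Finset (AStar A × BStar A B)) (b : B) (i : ℕ) : Prop :=
  (1 ≤ i ∧ i < Fintype.card A ∧
     ∃ j : Fin (Fintype.card A), (j : ℕ) = i ∧
       ∃ a : A, AtLevelA S a i ∧ ((a, j), (Sum.inl b : BStar A B)) ∈ S) ∨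
  (i = 0 ∧ ∀ j : Fin (Fintype.card A), 1 ≤ (j : ℕ) →
       ∀ a : A, AtLevelA S a (j : ℕ) → ((a, j), (Sum.inl b : BStar A B)) ∉ S)

/-!
Each node casts a vote in `{-1, 0, 1}` on a pair of matchings. The weight `wt_M(a,b)` is exactly the
vote of `a` for being matched to `b` rather than to `M(a)` plus the vote of `b` for being matched to
`a` rather than to `M(b)`. Hence `Σ_{e ∈ N} wt_M(e)` adds up the votes of the nodes matched in `N`,
while `Δ(N,M)` adds up the votes of all nodes; a node unmatched in `N` never votes for `N`. Finally,
`wt_M` vanishes on `M`, so summing over `N` or over `M ⊕ N` makes no difference.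
-/

section FinsetSums

variable {ι κ R : Type*}

lemma sum_univ_le_sum_comp_of_injOn [Fintype κ] [AddCommMonoid R] [Preorder R]
    [AddLeftMono R] {s : Finset ι} {g : ι → κ} {f : κ → R}
    (hg : Set.InjOn g s) (hf : ∀ c, (∀ x ∈ s, g x ≠ c) → f c ≤ 0) :
    ∑ c, f c ≤ ∑ x ∈ s, f (g x) := by
  rw [← Finset.sum_image hg]
  refine Finset.sum_le_sum_of_subset_of_nonpos' (Finset.subset_univ _) fun c _ hc => hf c ?_
  rintro x hx rfl
  exact hc (Finset.mem_image_of_mem g hx)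

lemma sum_symmDiff_eq_sum_right [DecidableEq ι] [AddCommMonoid R] {s t : Finset ι} {f : ι → R}
    (hf : ∀ x ∈ s, f x = 0) : ∑ x ∈ symmDiff s t, f x = ∑ x ∈ t, f x := by
  refine Finset.sum_congr_of_eq_on_inter ?_ ?_ fun _ _ _ => rfl
  · intro x hx hxt
    exact hf x ((Finset.mem_symmDiff.mp hx).resolve_right fun h => hxt h.1).1
  · intro x hxt hx
    exact hf x (by_contra fun hxs => hx (Finset.mem_symmDiff.mpr (.inr ⟨hxt, hxs⟩)))

end FinsetSums

section Votes

variable {α : Type*} {r : α → α → Prop} {S T : Set α} {x : α}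

/-- A node with preference relation `r` prefers having the set of partners `S` to having `T`. In a
matching such a set has at most one element, and it is empty exactly when the node is unmatched.
Both `prefersA` and `prefersB` are instances of this relation, which lets the two sides of the
graph share their proofs. -/
def PrefersPartners (r : α → α → Prop) (S T : Set α) : Prop :=
  ∃ x ∈ S, ¬ T.Nonempty ∨ ∃ y ∈ T, r x y

/-- The vote of a node with preference relation `r` on the sets of partners `S` and `T`: it is `1`
if the node prefers `S`, `-1` if it prefers `T`, and `0` if it is indifferent. -/
def vote (r : α → α → Prop) (S T : Set α) : ℤ :=
  (if PrefersPartners r S T then 1 else 0) - (if PrefersPartners r T S then 1 else 0)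

lemma prefersPartners_singleton_left :
    PrefersPartners r {x} T ↔ ¬ T.Nonempty ∨ ∃ y ∈ T, r x y := by
  simp [PrefersPartners]

lemma prefersPartners_singleton_right : PrefersPartners r S {x} ↔ ∃ y ∈ S, r y x := by
  simp [PrefersPartners]

lemma prefersPartners_singleton_right_iff_not [Std.Asymm r] (hS : S.Subsingleton)
    (hr : ∀ y ∈ S, r x y ∨ r y x) :
    PrefersPartners r S {x} ↔ ¬ PrefersPartners r {x} S := by
  rw [prefersPartners_singleton_left, prefersPartners_singleton_right]
  rcases hS.eq_empty_or_singleton with rfl | ⟨y, rfl⟩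
  · simp
  · have hxy : r x y ∨ r y x := hr y rfl
    have hasymm : r x y → ¬ r y x := asymm
    simp only [Set.singleton_nonempty, Set.mem_singleton_iff, exists_eq_left, not_true_eq_false,
      false_or]
    tauto

lemma vote_self (r : α → α → Prop) (S : Set α) : vote r S S = 0 :=
  sub_self _

lemma vote_empty_left_nonpos (r : α → α → Prop) (T : Set α) : vote r ∅ T ≤ 0 := by
  have hempty : ¬ PrefersPartners r ∅ T := by simp [PrefersPartners]
  rw [vote, if_neg hempty]
  split_ifs <;> norm_num

lemma vote_singleton_left [Std.Asymm r] (hS : S.Subsingleton) (hr : ∀ y ∈ S, r x y ∨ r y x) :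
    vote r {x} S = if PrefersPartners r {x} S then 1 else -1 := by
  rw [vote, prefersPartners_singleton_right_iff_not hS hr]
  split_ifs <;> norm_num

end Votes

section Partners

variable {I : PrefSys A B} {M : Finset (A × B)} {a : A} {b : B}

/-- The set of partners of `a ∈ A` in `M`; for a matching it is `{M(a)}` or empty. -/
def partnersA (M : Finset (A × B)) (a : A) : Set B := {b | (a, b) ∈ M}

/-- The set of partners of `b ∈ B` in `M`; for a matching it is `{M(b)}` or empty. -/
def partnersB (M : Finset (A × B)) (b : B) : Set A := {a | (a, b) ∈ M}

lemma partnersA_eq_empty (ha : ∀ e ∈ M, e.1 ≠ a) : partnersA M a = ∅ :=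
  Set.eq_empty_of_forall_notMem fun b hb => ha (a, b) hb rfl

lemma partnersB_eq_empty (hb : ∀ e ∈ M, e.2 ≠ b) : partnersB M b = ∅ :=
  Set.eq_empty_of_forall_notMem fun a ha => hb (a, b) ha rfl

namespace IsMatching

lemma partnersA_subsingleton (hM : IsMatching I M) (a : A) : (partnersA M a).Subsingleton :=
  fun _ hb _ hb' => congrArg Prod.snd (hM.2.1 _ hb _ hb' rfl)

lemma partnersB_subsingleton (hM : IsMatching I M) (b : B) : (partnersB M b).Subsingleton :=
  fun _ ha _ ha' => congrArg Prod.fst (hM.2.2 _ ha _ ha' rfl)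

lemma partnersA_eq_singleton (hM : IsMatching I M) (h : (a, b) ∈ M) : partnersA M a = {b} :=
  (hM.partnersA_subsingleton a).eq_singleton_of_mem h

lemma partnersB_eq_singleton (hM : IsMatching I M) (h : (a, b) ∈ M) : partnersB M b = {a} :=
  (hM.partnersB_subsingleton b).eq_singleton_of_mem h

end IsMatching

lemma PrefSys.IsValid.asymm_prefA (hI : I.IsValid) (a : A) : Std.Asymm (I.prefA a) :=
  ⟨fun _ _ h h' => hI.1 a _ (hI.2.1 a _ _ _ h h')⟩

lemma PrefSys.IsValid.asymm_prefB (hI : I.IsValid) (b : B) : Std.Asymm (I.prefB b) :=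
  ⟨fun _ _ h h' => hI.2.2.2.1 b _ (hI.2.2.2.2.1 b _ _ _ h h')⟩

lemma prefA_or_prefA_of_notMem (hI : I.IsValid) (hM : IsMatching I M) (hE : I.E a b)
    (hab : (a, b) ∉ M) : ∀ b' ∈ partnersA M a, I.prefA a b b' ∨ I.prefA a b' b :=
  fun b' hb' => hI.2.2.1 a b b' hE (hM.1 _ hb') (by rintro rfl; exact hab hb')

lemma prefB_or_prefB_of_notMem (hI : I.IsValid) (hM : IsMatching I M) (hE : I.E a b)
    (hab : (a, b) ∉ M) : ∀ a' ∈ partnersB M b, I.prefB b a a' ∨ I.prefB b a' a :=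
  fun a' ha' => hI.2.2.2.2.2 b a a' hE (hM.1 _ ha') (by rintro rfl; exact hab ha')

end Partners

section Weights

variable {I : PrefSys A B} {M N : Finset (A × B)} {a : A} {b : B}

lemma blocks_iff_prefersPartners (hE : I.E a b) (hab : (a, b) ∉ M) :
    Blocks I M a b ↔ PrefersPartners (I.prefA a) {b} (partnersA M a) ∧
      PrefersPartners (I.prefB b) {a} (partnersB M b) := by
  rw [prefersPartners_singleton_left, prefersPartners_singleton_left]
  exact ⟨fun h => h.2.2, fun h => ⟨hE, hab, h⟩⟩

lemma wt_eq_ite_prefersPartners (hE : I.E a b) (hab : (a, b) ∉ M) :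
    wt I M a b =
      if PrefersPartners (I.prefA a) {b} (partnersA M a) ∧
        PrefersPartners (I.prefB b) {a} (partnersB M b) then 2
      else if PrefersPartners (I.prefA a) (partnersA M a) {b} ∧
        PrefersPartners (I.prefB b) (partnersB M b) {a} then -2
      else 0 := by
  simp only [wt, blocks_iff_prefersPartners hE hab, prefersPartners_singleton_right]
  rfl

lemma wt_eq_zero_of_mem (hI : I.IsValid) (hM : IsMatching I M) (hab : (a, b) ∈ M) :
    wt I M a b = 0 := by
  have hnot_blocks : ¬ Blocks I M a b := fun h => h.2.1 hab
  have hnot_prefA : ¬ ∃ b', (a, b') ∈ M ∧ I.prefA a b' b := by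
    rintro ⟨b', hb', hpref⟩
    obtain rfl : b' = b := hM.partnersA_subsingleton a hb' hab
    exact hI.1 a b' hpref
  rw [wt, if_neg hnot_blocks, if_neg fun h => hnot_prefA h.1]

lemma wt_eq_vote_add_vote (hI : I.IsValid) (hM : IsMatching I M) (hE : I.E a b) :
    wt I M a b = vote (I.prefA a) {b} (partnersA M a) + vote (I.prefB b) {a} (partnersB M b) := by
  by_cases hab : (a, b) ∈ M
  · rw [wt_eq_zero_of_mem hI hM hab, hM.partnersA_eq_singleton hab, hM.partnersB_eq_singleton hab,
      vote_self, vote_self, add_zero]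
  · have := hI.asymm_prefA a
    have := hI.asymm_prefB b
    have hA := prefA_or_prefA_of_notMem hI hM hE hab
    have hB := prefB_or_prefB_of_notMem hI hM hE hab
    have hsubA := hM.partnersA_subsingleton a
    have hsubB := hM.partnersB_subsingleton b
    rw [wt_eq_ite_prefersPartners hE hab, prefersPartners_singleton_right_iff_not hsubA hA,
      prefersPartners_singleton_right_iff_not hsubB hB, vote_singleton_left hsubA hA,
      vote_singleton_left hsubB hB]
    split_ifs <;> first | rfl | tauto

lemma wt_eq_vote_add_vote_of_mem (hI : I.IsValid) (hM : IsMatching I M) (hN : IsMatching I N)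
    (hab : (a, b) ∈ N) :
    wt I M a b = vote (I.prefA a) (partnersA N a) (partnersA M a) +
      vote (I.prefB b) (partnersB N b) (partnersB M b) := by
  rw [hN.partnersA_eq_singleton hab, hN.partnersB_eq_singleton hab]
  exact wt_eq_vote_add_vote hI hM (hN.1 _ hab)

end Weights

section Delta

variable [Fintype A] [Fintype B] {I : PrefSys A B} {M N : Finset (A × B)}

lemma Delta_eq_sum_vote (I : PrefSys A B) (M N : Finset (A × B)) :
    Delta I M N = ∑ a, vote (I.prefA a) (partnersA M a) (partnersA N a) +
      ∑ b, vote (I.prefB b) (partnersB M b) (partnersB N b) := by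
  have hphi (M N : Finset (A × B)) : (phi I M N : ℤ) =
      (∑ a, if PrefersPartners (I.prefA a) (partnersA M a) (partnersA N a) then 1 else 0) +
        ∑ b, if PrefersPartners (I.prefB b) (partnersB M b) (partnersB N b) then 1 else 0 := by
    rw [phi, ← Finset.sum_boole, Fintype.sum_sum_type]
    rfl
  simp only [Delta, hphi, vote, Finset.sum_sub_distrib]
  ring

lemma Delta_le_sum_wt (hI : I.IsValid) (hM : IsMatching I M) (hN : IsMatching I N) :
    Delta I N M ≤ ∑ e ∈ N, wt I M e.1 e.2 := by
  have hsumA : ∑ a, vote (I.prefA a) (partnersA N a) (partnersA M a) ≤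
      ∑ e ∈ N, vote (I.prefA e.1) (partnersA N e.1) (partnersA M e.1) :=
    sum_univ_le_sum_comp_of_injOn (fun e he e' he' => hN.2.1 e he e' he') fun a ha => by
      rw [partnersA_eq_empty ha]
      exact vote_empty_left_nonpos _ _
  have hsumB : ∑ b, vote (I.prefB b) (partnersB N b) (partnersB M b) ≤
      ∑ e ∈ N, vote (I.prefB e.2) (partnersB N e.2) (partnersB M e.2) :=
    sum_univ_le_sum_comp_of_injOn (fun e he e' he' => hN.2.2 e he e' he') fun b hb => by
      rw [partnersB_eq_empty hb]
      exact vote_empty_left_nonpos _ _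
  calc Delta I N M
      = ∑ a, vote (I.prefA a) (partnersA N a) (partnersA M a) +
          ∑ b, vote (I.prefB b) (partnersB N b) (partnersB M b) := Delta_eq_sum_vote I N M
    _ ≤ ∑ e ∈ N, vote (I.prefA e.1) (partnersA N e.1) (partnersA M e.1) +
          ∑ e ∈ N, vote (I.prefB e.2) (partnersB N e.2) (partnersB M e.2) := add_le_add hsumA hsumB
    _ = ∑ e ∈ N, wt I M e.1 e.2 := by
      rw [← Finset.sum_add_distrib]
      exact Finset.sum_congr rfl fun e he => (wt_eq_vote_add_vote_of_mem hI hM hN he).symm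

end Delta

theorem stmt2_general {A B : Type*} [Fintype A] [Fintype B] [DecidableEq A] [DecidableEq B]
    (I : PrefSys A B) (hI : I.IsValid) (M N : Finset (A × B))
    (hM : IsMatching I M) (hN : IsMatching I N) :
    Delta I N M ≤ ∑ e ∈ symmDiff M N, wt I M e.1 e.2 :=
  (Delta_le_sum_wt hI hM hN).trans_eq
    (sum_symmDiff_eq_sum_right fun _ he => wt_eq_zero_of_mem hI hM he).symm

/-- For maximum matchings `M` and `N`,
`Δ(N,M) ≤ Σ_ρ wt_M(ρ)` where `ρ` ranges over the connected components (alternating paths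
and alternating cycles wrt `M`) of `M ⊕ N`; since these components partition the edge set
of `M ⊕ N`, this sum equals `Σ_{e ∈ M ⊕ N} wt_M(e)`. -/
theorem stmt2 {A B : Type*} [Fintype A] [Fintype B] [DecidableEq A] [DecidableEq B]
    (I : PrefSys A B) (hI : I.IsValid) (M N : Finset (A × B))
    (hM : IsMaximumMatching I M) (hN : IsMaximumMatching I N) :
    Delta I N M ≤ ∑ e ∈ symmDiff M N, wt I M e.1 e.2 :=
  stmt2_general I hI M N hM.1 hN.1

end PopMax
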